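/- arXiv:0811.3496 — 4 statements merged into one kernel-verified Lean document; each statement's English description precedes it below -/
import Mathlib

section
/- Let Γ = [γ_ij] ∈ ℝ^{p×p} be a connected interconnection and let r ∈ ℝ^p satisfy r^T Γ = 0 and r^T 1 = 1, where 1 is the all-ones vector. Then there exists a symmetric positive definite matrix Ω ∈ ℝ^{p×p} such that (Γ − 1 r^T)^T Ω + Ω (Γ − 1 r^T) = −I_p. -/
open Matrix

noncomputable section

/-- A continuous-time interconnection matrix: off-diagonal entries nonnegative and
`Γ i i = -∑_{j ≠ i} Γ i j`. -/
def IsInterconnection {p : ℕ} (Γ : Matrix (Fin p) (Fin p) ℝ) : Prop :=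
  (∀ i j, i ≠ j → 0 ≤ Γ i j) ∧
  ∀ i, Γ i i = -∑ j ∈ Finset.univ.filter (fun j => j ≠ i), Γ i j

/-- The graph of the matrix (edge `(i,j)` iff the `(i,j)` entry is positive) has a node to which
there is a directed path from every other node. -/
def ConnectedMat {p : ℕ} (Γ : Matrix (Fin p) (Fin p) ℝ) : Prop :=
  ∃ v : Fin p, ∀ u : Fin p, Relation.ReflTransGen (fun i j => 0 < Γ i j) u v

section Lyapunov

attribute [local instance] Matrix.frobeniusNormedRing Matrix.frobeniusNormedAlgebra

variable {n : Type*} [Fintype n] [DecidableEq n]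

/-- The powers of a complex matrix without eigenvalues of modulus at least one decay
geometrically. -/
theorem eventually_norm_pow_le_of_eigenvalues_lt_one [Nonempty n] (M : Matrix n n ℂ)
    (hM : ∀ (μ : ℂ) (z : n → ℂ), 1 ≤ ‖μ‖ → M *ᵥ z = μ • z → z = 0) :
    ∃ ρ : ℝ, 0 ≤ ρ ∧ ρ < 1 ∧ ∀ᶠ k : ℕ in Filter.atTop, ‖M ^ k‖ ≤ ρ ^ k := by
  have hspec : ∀ μ ∈ spectrum ℂ M, ‖μ‖₊ < 1 := by
    intro μ hμ
    by_contra! hlt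
    rw [spectrum.mem_iff, Matrix.isUnit_iff_isUnit_det, isUnit_iff_ne_zero, not_not,
      ← Matrix.exists_mulVec_eq_zero_iff] at hμ
    obtain ⟨z, hz0, hz⟩ := hμ
    refine hz0 (hM μ z (by exact_mod_cast hlt) ?_)
    rw [Matrix.sub_mulVec, sub_eq_zero, Algebra.algebraMap_eq_smul_one, Matrix.smul_mulVec,
      Matrix.one_mulVec] at hz
    exact hz.symm
  have hrad : spectralRadius ℂ M < (1 : NNReal) := spectrum.spectralRadius_lt_of_forall_lt M hspec
  obtain ⟨ρ, hρ, hρ1⟩ := ENNReal.lt_iff_exists_nnreal_btwn.mp hrad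
  refine ⟨ρ, ρ.2, by exact_mod_cast hρ1, ?_⟩
  filter_upwards [(spectrum.pow_nnnorm_pow_one_div_tendsto_nhds_spectralRadius M).eventually_lt_const
    hρ, Filter.eventually_gt_atTop 0] with k hk hk0
  rw [one_div] at hk
  have h := (ENNReal.rpow_inv_le_iff (by exact_mod_cast hk0 : (0 : ℝ) < k)).mp hk.le
  rw [ENNReal.rpow_natCast] at h
  exact_mod_cast h

/-- The discrete Lyapunov equation `P - Mᵀ P M = Q` has a positive definite solution when `Q` is
positive definite and the powers of `M` decay geometrically. -/
theorem exists_posDef_sub_transpose_mul_mul_eq (M Q : Matrix n n ℝ) (hQ : Q.PosDef) {ρ : ℝ}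
    (hρ0 : 0 ≤ ρ) (hρ1 : ρ < 1) (hM : ∀ᶠ k : ℕ in Filter.atTop, ‖M ^ k‖ ≤ ρ ^ k) :
    ∃ P : Matrix n n ℝ, P.PosDef ∧ P - Mᵀ * P * M = Q := by
  set F : ℕ → Matrix n n ℝ := fun k => (M ^ k)ᵀ * Q * M ^ k with hF
  have hsum : Summable F := by
    have hgeom : Summable fun k : ℕ => ‖Q‖ * (ρ ^ 2) ^ k :=
      (summable_geometric_of_lt_one (sq_nonneg ρ) (by nlinarith)).mul_left _
    refine Summable.of_norm_bounded_eventually_nat hgeom ?_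
    filter_upwards [hM] with k hk
    calc ‖F k‖ ≤ ‖(M ^ k)ᵀ‖ * ‖Q‖ * ‖M ^ k‖ :=
          (norm_mul_le _ _).trans (mul_le_mul_of_nonneg_right (norm_mul_le _ _) (norm_nonneg _))
      _ = ‖M ^ k‖ * ‖Q‖ * ‖M ^ k‖ := by rw [Matrix.frobenius_norm_transpose]
      _ ≤ ρ ^ k * ‖Q‖ * ρ ^ k := by gcongr
      _ = ‖Q‖ * (ρ ^ 2) ^ k := by ring
  have hQs : Qᵀ = Q := by simpa using hQ.isHermitian.eq
  have hform : ∀ (x : n → ℝ) k, x ⬝ᵥ (F k *ᵥ x) = (M ^ k *ᵥ x) ⬝ᵥ (Q *ᵥ (M ^ k *ᵥ x)) := by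
    intro x k
    simp only [hF, ← Matrix.mulVec_mulVec, Matrix.dotProduct_mulVec, Matrix.vecMul_transpose]
  refine ⟨∑' k, F k, ?_, ?_⟩
  · rw [Matrix.posDef_iff_dotProduct_mulVec]
    constructor
    · rw [Matrix.IsHermitian, Matrix.conjTranspose_eq_transpose_of_trivial, Matrix.transpose_tsum]
      refine tsum_congr fun k => ?_
      simp [hF, Matrix.transpose_mul, Matrix.mul_assoc, hQs]
    · intro x hx
      let φ : Matrix n n ℝ →+ ℝ :=
        { toFun := fun X => x ⬝ᵥ (X *ᵥ x)
          map_zero' := by simp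
          map_add' := by intro X Y; simp [Matrix.add_mulVec, dotProduct_add] }
      have hφ : Continuous φ := by
        change Continuous fun X : Matrix n n ℝ => x ⬝ᵥ (X *ᵥ x)
        fun_prop
      have hs : HasSum (fun k => x ⬝ᵥ (F k *ᵥ x)) (x ⬝ᵥ ((∑' k, F k) *ᵥ x)) :=
        hsum.hasSum.map φ hφ
      have hnonneg : ∀ k, 0 ≤ x ⬝ᵥ (F k *ᵥ x) := by
        intro k
        rw [hform]
        simpa using hQ.posSemidef.dotProduct_mulVec_nonneg (M ^ k *ᵥ x)
      have hpos : 0 < x ⬝ᵥ (F 0 *ᵥ x) := by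
        rw [hform]
        simpa using hQ.dotProduct_mulVec_pos hx
      simpa using hpos.trans_le (le_hasSum hs 0 fun k _ => hnonneg k)
  · have hshift : Mᵀ * (∑' k, F k) * M = ∑' k, F (k + 1) := by
      rw [← hsum.tsum_mul_left, ← (hsum.mul_left _).tsum_mul_right]
      refine tsum_congr fun k => ?_
      simp only [hF, pow_succ, Matrix.transpose_mul, Matrix.mul_assoc]
    rw [hshift, hsum.tsum_eq_zero_add]
    simp [hF]

/-- **Lyapunov's theorem**: a real matrix whose complex eigenvalues all have negative real part
admits a positive definite solution of the continuous Lyapunov equation. -/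
theorem exists_posDef_lyapunov [Nonempty n] (A : Matrix n n ℝ)
    (hA : ∀ (μ : ℂ) (z : n → ℂ), 0 ≤ μ.re → A.map Complex.ofReal *ᵥ z = μ • z → z = 0) :
    ∃ P : Matrix n n ℝ, P.PosDef ∧ Aᵀ * P + P * A = -1 := by
  set f : Matrix n n ℝ →+* Matrix n n ℂ := Complex.ofRealHom.mapMatrix with hf
  have hfA : f A = A.map Complex.ofReal := rfl
  have hdet : IsUnit (1 - A).det := by
    rw [isUnit_iff_ne_zero]
    intro h0
    obtain ⟨z, hz0, hz⟩ := Matrix.exists_mulVec_eq_zero_iff.mpr (show (f (1 - A)).det = 0 by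
      rw [hf, ← RingHom.map_det, h0, map_zero])
    refine hz0 (hA 1 z (by simp) ?_)
    rw [map_sub, map_one, Matrix.sub_mulVec, Matrix.one_mulVec, sub_eq_zero] at hz
    rw [← hfA, one_smul, ← hz]
  set N := (1 - A)⁻¹ with hN
  have hAN : (1 - A) * N = 1 := Matrix.mul_nonsing_inv _ hdet
  have hNA : N * (1 - A) = 1 := Matrix.nonsing_inv_mul _ hdet
  set M := (1 + A) * N with hM
  have hMA : M * (1 - A) = 1 + A := by rw [hM, Matrix.mul_assoc, hNA, Matrix.mul_one]
  have hMeig : ∀ (μ : ℂ) (z : n → ℂ), 1 ≤ ‖μ‖ → f M *ᵥ z = μ • z → z = 0 := by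
    intro μ z hμ hz
    have hzy : z = f (1 - A) *ᵥ (f N *ᵥ z) := by
      rw [Matrix.mulVec_mulVec, ← map_mul, hAN, map_one, Matrix.one_mulVec]
    suffices hy : f N *ᵥ z = 0 by rw [hzy, hy, Matrix.mulVec_zero]
    set y := f N *ᵥ z with hy
    have hy2 : f (1 + A) *ᵥ y = μ • f (1 - A) *ᵥ y := by
      rw [← hzy, ← hz, hM, map_mul, ← Matrix.mulVec_mulVec]
    have hlin : (μ + 1) • (f A *ᵥ y) = (μ - 1) • y := by
      simp only [map_add, map_sub, map_one, Matrix.add_mulVec, Matrix.sub_mulVec,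
        Matrix.one_mulVec] at hy2
      rw [add_smul, sub_smul, one_smul, one_smul, ← sub_eq_zero]
      rw [smul_sub, ← sub_eq_zero] at hy2
      rw [← hy2]
      abel
    by_cases h1 : μ + 1 = 0
    · rw [h1, zero_smul] at hlin
      refine (smul_eq_zero.mp hlin.symm).resolve_left fun h => ?_
      have : (2 : ℂ) = 0 := by linear_combination h1 - h
      norm_num at this
    · refine hA ((μ - 1) / (μ + 1)) y ?_ ?_
      · have hsq : 1 ≤ Complex.normSq μ := by
          rw [Complex.normSq_eq_norm_sq]; nlinarith
        rw [Complex.normSq_apply] at hsq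
        rw [Complex.div_re, ← add_div]
        refine div_nonneg ?_ (Complex.normSq_nonneg _)
        simp
        nlinarith
      · rw [← hfA, div_eq_inv_mul, mul_smul, ← hlin, smul_smul, inv_mul_cancel₀ h1, one_smul]
  obtain ⟨ρ, hρ0, hρ1, hρ⟩ := eventually_norm_pow_le_of_eigenvalues_lt_one (f M) hMeig
  have hρ' : ∀ᶠ k : ℕ in Filter.atTop, ‖M ^ k‖ ≤ ρ ^ k := by
    filter_upwards [hρ] with k hk
    rw [← map_pow] at hk
    rwa [← Matrix.frobenius_norm_map_eq (M ^ k) Complex.ofRealHom (by simp)]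
  have hQ : ((2 : ℝ) • (Nᵀ * N)).PosDef := by
    have hinj : Function.Injective N.mulVec :=
      Matrix.mulVec_injective_of_isUnit (IsUnit.of_mul_eq_one _ hNA)
    have := (Matrix.PosDef.one (n := n) (R := ℝ)).conjTranspose_mul_mul_same hinj
    rw [Matrix.mul_one, Matrix.conjTranspose_eq_transpose_of_trivial] at this
    exact this.smul two_pos
  obtain ⟨P, hP, hPeq⟩ := exists_posDef_sub_transpose_mul_mul_eq M _ hQ hρ0 hρ1 hρ'
  refine ⟨P, hP, ?_⟩
  have hconj : (1 - A)ᵀ * (P - Mᵀ * P * M) * (1 - A) = (2 : ℝ) • 1 := by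
    have hNt : (1 - A)ᵀ * Nᵀ = 1 := by rw [← Matrix.transpose_mul, hNA, Matrix.transpose_one]
    rw [hPeq, Matrix.mul_smul, Matrix.smul_mul, ← Matrix.mul_assoc, hNt, Matrix.one_mul, hNA]
  have hexp : (1 - A)ᵀ * (P - Mᵀ * P * M) * (1 - A)
      = (1 - A)ᵀ * P * (1 - A) - (M * (1 - A))ᵀ * P * (M * (1 - A)) := by
    rw [Matrix.transpose_mul M (1 - A)]
    noncomm_ring
  have htwo : (2 : ℝ) • (Aᵀ * P + P * A) = (2 : ℝ) • (-1 : Matrix n n ℝ) := by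
    rw [smul_neg, ← hconj, hexp, hMA, Matrix.transpose_add, Matrix.transpose_sub,
      Matrix.transpose_one, two_smul]
    noncomm_ring
  exact smul_right_injective _ (two_ne_zero : (2 : ℝ) ≠ 0) htwo

end Lyapunov

section Interconnection

variable {p : ℕ} {Γ : Matrix (Fin p) (Fin p) ℝ}

theorem IsInterconnection.mulVec_apply (hΓ : IsInterconnection Γ) (z : Fin p → ℂ) (i : Fin p) :
    (Γ.map Complex.ofReal *ᵥ z) i = ∑ j, (Γ i j : ℂ) * (z j - z i) := by
  have hrow : ∑ j, Γ i j = 0 := by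
    rw [← Finset.sum_filter_add_sum_filter_not Finset.univ (fun j => j ≠ i), ← neg_neg (∑ j ∈ _, _),
      ← hΓ.2 i]
    simp [Finset.filter_eq']
  have hrow' : ∑ j, (Γ i j : ℂ) = 0 := by exact_mod_cast congrArg Complex.ofReal hrow
  simp [Matrix.mulVec, dotProduct, mul_sub, Finset.sum_sub_distrib, ← Finset.sum_mul, hrow']

/-- At an entry of maximal modulus of an eigenvector with eigenvalue in the closed right half-plane,
all out-neighbours carry the same value. -/
theorem IsInterconnection.eq_of_edge_of_norm_max (hΓ : IsInterconnection Γ) {μ : ℂ}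
    (hμ : 0 ≤ μ.re) {z : Fin p → ℂ} (hz : Γ.map Complex.ofReal *ᵥ z = μ • z) {i : Fin p}
    (hi : ∀ j, ‖z j‖ ≤ ‖z i‖) {j : Fin p} (hij : 0 < Γ i j) : z j = z i := by
  have hrow : ∑ k, (Γ i k : ℂ) * (z k - z i) = μ * z i := by
    rw [← hΓ.mulVec_apply, hz]; rfl
  have hre : ∑ k, Γ i k * (((z k - z i) * star (z i)).re) = μ.re * Complex.normSq (z i) := by
    have h := congrArg (fun w => (w * star (z i)).re) hrow
    simp only [Finset.sum_mul, Complex.re_sum] at h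
    have h2 : (μ * z i * star (z i)).re = μ.re * Complex.normSq (z i) := by
      rw [mul_assoc, Complex.star_def, Complex.mul_conj, Complex.re_mul_ofReal]
    rw [← h2, ← h]
    exact Finset.sum_congr rfl fun k _ => by rw [mul_assoc, Complex.re_ofReal_mul]
  have hsq : ∀ k, Complex.normSq (z k) ≤ Complex.normSq (z i) := by
    intro k
    rw [Complex.normSq_eq_norm_sq, Complex.normSq_eq_norm_sq]
    exact pow_le_pow_left₀ (norm_nonneg _) (hi k) 2
  -- `2 Re ((w - u) ū) = |w|² - |u|² - |w - u|²`
  have hpol : ∀ k, 2 * ((z k - z i) * star (z i)).re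
      = Complex.normSq (z k) - Complex.normSq (z i) - Complex.normSq (z k - z i) := by
    intro k
    simp only [Complex.normSq_apply, Complex.star_def, Complex.mul_re, Complex.conj_re,
      Complex.conj_im, Complex.sub_re, Complex.sub_im]
    ring
  have hle : ∀ k, Γ i k * ((z k - z i) * star (z i)).re ≤ 0 := by
    intro k
    by_cases hk : i = k
    · simp [← hk]
    · refine mul_nonpos_of_nonneg_of_nonpos (hΓ.1 i k hk) ?_
      linarith [hpol k, hsq k, Complex.normSq_nonneg (z k - z i)]
  have hsum : ∑ k, Γ i k * ((z k - z i) * star (z i)).re = 0 :=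
    le_antisymm (Finset.sum_nonpos fun k _ => hle k)
      (hre ▸ mul_nonneg hμ (Complex.normSq_nonneg _))
  have hterm := (Finset.sum_eq_zero_iff_of_nonpos fun k _ => hle k).mp hsum j (Finset.mem_univ j)
  have hzero := (mul_eq_zero.mp hterm).resolve_left hij.ne'
  have hnorm : Complex.normSq (z j - z i) = 0 :=
    le_antisymm (by linarith [hpol j, hsq j]) (Complex.normSq_nonneg _)
  exact sub_eq_zero.mp (Complex.normSq_eq_zero.mp hnorm)

theorem IsInterconnection.eq_of_path_of_norm_max (hΓ : IsInterconnection Γ) {μ : ℂ}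
    (hμ : 0 ≤ μ.re) {z : Fin p → ℂ} (hz : Γ.map Complex.ofReal *ᵥ z = μ • z) {i : Fin p}
    (hi : ∀ j, ‖z j‖ ≤ ‖z i‖) {j : Fin p}
    (hij : Relation.ReflTransGen (fun i j => 0 < Γ i j) i j) : z j = z i := by
  induction hij with
  | refl => rfl
  | tail _ hedge ih => rw [hΓ.eq_of_edge_of_norm_max hμ hz (by rwa [ih]) hedge, ih]

/-- For a connected interconnection, the only eigenvectors with eigenvalue in the closed right
half-plane are the constant vectors. -/
theorem IsInterconnection.eq_const_of_eigenvector (hΓ : IsInterconnection Γ)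
    (hconn : ConnectedMat Γ) {μ : ℂ} (hμ : 0 ≤ μ.re) {z : Fin p → ℂ}
    (hz : Γ.map Complex.ofReal *ᵥ z = μ • z) : ∃ c : ℂ, ∀ i, z i = c := by
  obtain ⟨v, hv⟩ := hconn
  have : Nonempty (Fin p) := ⟨v⟩
  obtain ⟨m, hm⟩ := Finite.exists_max fun i => ‖z i‖
  have hvm : z v = z m := hΓ.eq_of_path_of_norm_max hμ hz hm (hv m)
  have hrow : μ * z v = 0 := by
    have h := congrFun hz v
    rw [hΓ.mulVec_apply, Pi.smul_apply, smul_eq_mul] at h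
    rw [← h]
    refine Finset.sum_eq_zero fun j _ => ?_
    by_cases hj : v = j
    · simp [← hj]
    · rcases (hΓ.1 v j hj).eq_or_lt with h0 | hpos
      · simp [← h0]
      · rw [hΓ.eq_of_edge_of_norm_max hμ hz (by rwa [hvm]) hpos, sub_self, mul_zero]
  rcases mul_eq_zero.mp hrow with rfl | hzv
  · -- subtract the value at `v` and look at an entry of maximal modulus
    set w : Fin p → ℂ := fun i => z i - z v with hw
    have hwker : Γ.map Complex.ofReal *ᵥ w = (0 : ℂ) • w := by
      ext i
      have h := congrFun hz i
      rw [hΓ.mulVec_apply] at h ⊢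
      simpa [hw] using h
    obtain ⟨k, hk⟩ := Finite.exists_max fun i => ‖w i‖
    have hwk : w v = w k := hΓ.eq_of_path_of_norm_max le_rfl hwker hk (hv k)
    refine ⟨z v, fun i => sub_eq_zero.mp (norm_le_zero_iff.mp ((hk i).trans ?_))⟩
    rw [← hwk]
    simp [hw]
  · refine ⟨0, fun i => norm_le_zero_iff.mp ((hm i).trans ?_)⟩
    rw [← hvm, hzv, norm_zero]

end Interconnection

theorem stmt0 {p : ℕ} (Γ : Matrix (Fin p) (Fin p) ℝ)
    (hΓ : IsInterconnection Γ) (hconn : ConnectedMat Γ)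
    (r : Fin p → ℝ) (hr1 : Matrix.vecMul r Γ = 0) (hr2 : ∑ i, r i = 1) :
    ∃ Ω : Matrix (Fin p) (Fin p) ℝ, Ω.IsSymm ∧ Ω.PosDef ∧
      (Γ - vecMulVec (fun _ => (1 : ℝ)) r)ᵀ * Ω + Ω * (Γ - vecMulVec (fun _ => (1 : ℝ)) r)
        = -1 := by
  have : Nonempty (Fin p) := ⟨hconn.choose⟩
  obtain ⟨Ω, hΩ, heq⟩ := exists_posDef_lyapunov (Γ - vecMulVec (fun _ => (1 : ℝ)) r) (by
    intro μ z hμ hz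
    set s : ℂ := ∑ j, (r j : ℂ) * z j with hs
    have hrow : ∀ i, (Γ.map Complex.ofReal *ᵥ z) i = μ * z i + s := by
      intro i
      have h := congrFun hz i
      simp only [Matrix.mulVec, dotProduct, Matrix.map_apply, Matrix.sub_apply, vecMulVec_apply,
        one_mul, Complex.ofReal_sub, sub_mul, Finset.sum_sub_distrib, Pi.smul_apply,
        smul_eq_mul] at h ⊢
      linear_combination h
    have hrC : ∑ i, (r i : ℂ) = 1 := by exact_mod_cast congrArg Complex.ofReal hr2
    have hleft : ∑ i, (r i : ℂ) * (Γ.map Complex.ofReal *ᵥ z) i = 0 := by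
      simp only [Matrix.mulVec, dotProduct, Matrix.map_apply, Finset.mul_sum]
      rw [Finset.sum_comm]
      refine Finset.sum_eq_zero fun j _ => ?_
      have h : ∑ i, (r i : ℂ) * (Γ i j : ℂ) = 0 := by
        exact_mod_cast congrArg Complex.ofReal (congrFun hr1 j)
      simp only [← mul_assoc, ← Finset.sum_mul, h, zero_mul]
    have hs0 : s = 0 := by
      have h : (μ + 1) * s = 0 := by
        rw [← hleft]
        simp only [hrow, mul_add, Finset.sum_add_distrib, ← Finset.sum_mul, hrC]
        rw [add_mul, hs, Finset.mul_sum]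
        congr 1
        exact Finset.sum_congr rfl fun i _ => by ring
      refine (mul_eq_zero.mp h).resolve_left fun h1 => ?_
      have := congrArg Complex.re h1
      simp at this
      linarith
    obtain ⟨c, hc⟩ := hΓ.eq_const_of_eigenvector hconn hμ (z := z) (by
      ext i
      rw [hrow, hs0, add_zero, Pi.smul_apply, smul_eq_mul])
    have hc0 : c = 0 := by
      simpa [hs, hc, ← Finset.sum_mul, hrC] using hs0
    ext i
    rw [hc, hc0, Pi.zero_apply])
  exact ⟨Ω, by simpa [Matrix.IsSymm] using hΩ.isHermitian.eq, hΩ, heq⟩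
end
end

section
/- Let Γ ∈ ℝ^{p×p} be a connected interconnection, r ∈ ℝ^p satisfy r^T Γ = 0 and r^T 1 = 1, and Ω ∈ ℝ^{p×p} be symmetric positive definite with (Γ − 1 r^T)^T Ω + Ω (Γ − 1 r^T) = −I_p. Define V(x) := x^T (Ω ⊗ I_n) x for x ∈ ℝ^{np}. Then for every function Q : ℝ≥0 → Q_n (Riemann-integrable) and every solution x : ℝ≥0 → ℝ^{np} of ẋ(t) = (Γ ⊗ Q_t) x(t), setting x̄ := (1 r^T ⊗ I_n) x(0), one has d/dt V(x(t) − x̄) = −(x(t) − x̄)^T (I_p ⊗ Q_t)(x(t) − x̄) for all t ≥ 0. -/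
open Matrix MeasureTheory Filter
open scoped Kronecker

noncomputable section

/-- Euclidean norm of a vector. -/
def eunorm {ι : Type*} [Fintype ι] (v : ι → ℝ) : ℝ := Real.sqrt (∑ i, v i ^ 2)

/-- Spectral (induced 2-) norm of a matrix. -/
def specNorm {m n : Type*} [Fintype m] [Fintype n] (M : Matrix m n ℝ) : ℝ :=
  sSup {c : ℝ | ∃ v : n → ℝ, eunorm v ≤ 1 ∧ c = eunorm (M.mulVec v)}

/-- Smallest singular value of a matrix. -/
def sigmaMin {m n : Type*} [Fintype m] [Fintype n] (M : Matrix m n ℝ) : ℝ :=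
  sInf {c : ℝ | ∃ v : n → ℝ, eunorm v = 1 ∧ c = eunorm (M.mulVec v)}

/-- Largest singular value of a matrix. -/
def sigmaMax {m n : Type*} [Fintype m] [Fintype n] (M : Matrix m n ℝ) : ℝ :=
  sSup {c : ℝ | ∃ v : n → ℝ, eunorm v = 1 ∧ c = eunorm (M.mulVec v)}

/-- Membership in `Q̄_n`: symmetric positive semidefinite with spectral norm at most 1. -/
def InQbar {n : ℕ} (R : Matrix (Fin n) (Fin n) ℝ) : Prop :=
  R.PosSemidef ∧ specNorm R ≤ 1

/-- `δ(ε, T) = min{ε/2, ε³/(240 T⁵)}`. -/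
def deltaCT (ε T : ℝ) : ℝ := min (ε / 2) (ε ^ 3 / (240 * T ^ 5))

/-- Sufficient excitation for `Q : ℝ≥0 → Q_n`. -/
def SuffExcitingCT {n : ℕ} (Q : ℝ → Matrix (Fin n) (Fin n) ℝ) : Prop :=
  ∃ ε T : ℕ → ℝ, (∀ i, 0 < ε i) ∧ (∀ i, 0 < T i) ∧
    (∀ i, ε i ≤ sigmaMin (Matrix.of fun a b =>
      ∫ t in (∑ j ∈ Finset.range i, T j)..((∑ j ∈ Finset.range i, T j) + T i), Q t a b)) ∧
    Tendsto (fun N => ∑ i ∈ Finset.range N, deltaCT (ε i) (T i)) atTop atTop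

/-- Persistence of excitation for `Q : ℝ≥0 → Q_n`. -/
def PersExcitingCT {n : ℕ} (Q : ℝ → Matrix (Fin n) (Fin n) ℝ) : Prop :=
  ∃ ε T : ℝ, 0 < ε ∧ 0 < T ∧ ∀ t : ℝ, 0 ≤ t →
    ε ≤ sigmaMin (Matrix.of fun a b => ∫ s in t..(t + T), Q s a b)

/-- The derivative of a quadratic form along a curve. -/
lemma hasDerivAt_dotProduct_mulVec {ι : Type*} [Fintype ι] (W : Matrix ι ι ℝ)
    {y : ℝ → ι → ℝ} {y' : ι → ℝ} {t : ℝ} (hy : ∀ i, HasDerivAt (fun s => y s i) (y' i) t) :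
    HasDerivAt (fun s => y s ⬝ᵥ W.mulVec (y s))
      (y' ⬝ᵥ W.mulVec (y t) + y t ⬝ᵥ W.mulVec y') t := by
  have h : HasDerivAt (fun s => ∑ i, y s i * ∑ j, W i j * y s j)
      (∑ i, (y' i * ∑ j, W i j * y t j + y t i * ∑ j, W i j * y' j)) t :=
    HasDerivAt.fun_sum fun i _ =>
      (hy i).fun_mul (HasDerivAt.fun_sum fun j _ => (hy j).const_mul (W i j))
  simpa only [dotProduct, mulVec, Finset.sum_add_distrib] using h

/-- The rows of an interconnection sum to zero. -/
lemma IsInterconnection.mul_vecMulVec_one {p : ℕ} {Γ : Matrix (Fin p) (Fin p) ℝ}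
    (hΓ : IsInterconnection Γ) (r : Fin p → ℝ) :
    Γ * vecMulVec (fun _ => (1 : ℝ)) r = 0 := by
  have hrow : Γ.mulVec (fun _ => (1 : ℝ)) = 0 := by
    funext i
    have h := Finset.sum_filter_add_sum_filter_not Finset.univ (fun j => j ≠ i) (fun j => Γ i j)
    simp only [not_not, Finset.filter_eq', Finset.mem_univ, if_true, Finset.sum_singleton] at h
    simp only [mulVec, dotProduct, mul_one, Pi.zero_apply]
    rw [← h, hΓ.2 i]
    exact add_neg_cancel _
  rw [mul_vecMulVec, hrow, zero_vecMulVec]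

/-- A linear image of a curve is constant on `t ≥ 0` if the linear map kills its velocity. -/
lemma mulVec_eq_of_hasDerivAt {ι κ : Type*} [Fintype ι] (P : Matrix κ ι ℝ)
    {x : ℝ → ι → ℝ} {x' : ℝ → ι → ℝ}
    (hx : ∀ t : ℝ, 0 ≤ t → ∀ i, HasDerivAt (fun s => x s i) (x' t i) t)
    (hP : ∀ t, P.mulVec (x' t) = 0) {t : ℝ} (ht : 0 ≤ t) :
    P.mulVec (x t) = P.mulVec (x 0) := by
  funext k
  have hd : ∀ s : ℝ, 0 ≤ s → HasDerivAt (fun u => P.mulVec (x u) k) 0 s := by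
    intro s hs
    have h : HasDerivAt (fun u => ∑ j, P k j * x u j) (∑ j, P k j * x' s j) s :=
      HasDerivAt.fun_sum fun j _ => (hx s hs j).const_mul (P k j)
    have hz : ∑ j, P k j * x' s j = 0 := congrFun (hP s) k
    rwa [hz] at h
  exact constant_of_has_deriv_right_zero
    (fun s hs => (hd s hs.1).continuousAt.continuousWithinAt)
    (fun s hs => (hd s hs.1).hasDerivWithinAt) t ⟨ht, le_rfl⟩

theorem stmt1 {p n : ℕ} (Γ : Matrix (Fin p) (Fin p) ℝ)
    (hΓ : IsInterconnection Γ) (hconn : ConnectedMat Γ)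
    (r : Fin p → ℝ) (hr1 : Matrix.vecMul r Γ = 0) (hr2 : ∑ i, r i = 1)
    (Ω : Matrix (Fin p) (Fin p) ℝ) (hΩs : Ω.IsSymm) (hΩpd : Ω.PosDef)
    (hlyap : (Γ - vecMulVec (fun _ => (1 : ℝ)) r)ᵀ * Ω
        + Ω * (Γ - vecMulVec (fun _ => (1 : ℝ)) r) = -1)
    (V : ((Fin p × Fin n) → ℝ) → ℝ)
    (hV : ∀ z, V z = z ⬝ᵥ ((Ω ⊗ₖ (1 : Matrix (Fin n) (Fin n) ℝ)).mulVec z))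
    (Q : ℝ → Matrix (Fin n) (Fin n) ℝ)
    (hQ : ∀ t : ℝ, 0 ≤ t → (Q t).PosSemidef)
    (hQint : ∀ a b : Fin n, ∀ s u : ℝ, IntervalIntegrable (fun t => Q t a b) volume s u)
    (x : ℝ → (Fin p × Fin n) → ℝ)
    (hx : ∀ t : ℝ, 0 ≤ t → ∀ i, HasDerivAt (fun s => x s i) (((Γ ⊗ₖ Q t).mulVec (x t)) i) t)
    (xbar : (Fin p × Fin n) → ℝ)
    (hxbar : xbar = ((vecMulVec (fun _ => (1 : ℝ)) r) ⊗ₖ (1 : Matrix (Fin n) (Fin n) ℝ)).mulVec (x 0)) :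
    ∀ t : ℝ, 0 ≤ t →
      HasDerivAt (fun s => V (x s - xbar))
        (-((x t - xbar) ⬝ᵥ (((1 : Matrix (Fin p) (Fin p) ℝ) ⊗ₖ Q t).mulVec (x t - xbar)))) t := by
  intro t ht
  set P := vecMulVec (fun _ => (1 : ℝ)) r with hP
  have hΓP : Γ * P = 0 := hΓ.mul_vecMulVec_one r
  have hPΓ : P * Γ = 0 := by rw [hP, vecMulVec_mul, hr1, vecMulVec_zero]
  have hPP : P * P = P := by
    rw [hP, vecMulVec_mul_vecMulVec]
    simp [dotProduct, hr2]
  have hPx : (P ⊗ₖ (1 : Matrix (Fin n) (Fin n) ℝ)).mulVec (x t)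
      = (P ⊗ₖ (1 : Matrix (Fin n) (Fin n) ℝ)).mulVec (x 0) :=
    mulVec_eq_of_hasDerivAt _ hx
      (fun s => by rw [mulVec_mulVec, ← mul_kronecker_mul, hPΓ, zero_kronecker, zero_mulVec]) ht
  have hΓbar : (Γ ⊗ₖ Q t).mulVec xbar = 0 := by
    rw [hxbar, mulVec_mulVec, ← mul_kronecker_mul, hΓP, zero_kronecker, zero_mulVec]
  set y := x t - xbar with hy
  have hPy : (P ⊗ₖ (1 : Matrix (Fin n) (Fin n) ℝ)).mulVec y = 0 := by
    rw [hy, mulVec_sub, hPx, hxbar, mulVec_mulVec, ← mul_kronecker_mul, hPP, one_mul, sub_self]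
  have hPQy : (P ⊗ₖ Q t).mulVec y = 0 := by
    have h : P ⊗ₖ Q t = ((1 : Matrix (Fin p) (Fin p) ℝ) ⊗ₖ Q t) * (P ⊗ₖ 1) := by
      rw [← mul_kronecker_mul, one_mul, mul_one]
    rw [h, ← mulVec_mulVec, hPy, mulVec_zero]
  have hsub : (Γ - P) ⊗ₖ Q t = Γ ⊗ₖ Q t - P ⊗ₖ Q t := by
    ext ⟨a, b⟩ ⟨c, d⟩
    simp [kroneckerMap_apply, sub_mul]
  have hvel : (Γ ⊗ₖ Q t).mulVec (x t) = ((Γ - P) ⊗ₖ Q t).mulVec y := by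
    rw [hsub, sub_mulVec, hPQy, sub_zero, hy, mulVec_sub, hΓbar, sub_zero]
  have hQs : (Q t)ᵀ = Q t := by
    rw [← conjTranspose_eq_transpose_of_trivial]
    exact (hQ t ht).isHermitian
  have hd := hasDerivAt_dotProduct_mulVec (Ω ⊗ₖ (1 : Matrix (Fin n) (Fin n) ℝ))
    (y := fun s => x s - xbar) (fun i => (hx t ht i).sub_const (xbar i))
  simp only [hV]
  convert hd using 1
  rw [← hy, hvel, mulVec_mulVec, ← vecMul_transpose ((Γ - P) ⊗ₖ Q t), ← dotProduct_mulVec,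
    mulVec_mulVec, ← dotProduct_add, ← add_mulVec, ← kroneckerMap_transpose, hQs,
    ← mul_kronecker_mul, ← mul_kronecker_mul, one_mul, mul_one, ← add_kronecker, hlyap,
    ← dotProduct_neg, ← neg_mulVec]
  congr 2
  ext ⟨a, b⟩ ⟨c, d⟩
  simp [kroneckerMap_apply]
end
end

section
/- Given any interconnection Γ ∈ ℝ^{p×p} (not necessarily connected), there exists α > 0 such that for every function Q : ℝ≥0 → Q_n (Riemann-integrable) and every solution x : ℝ≥0 → ℝ^{np} of ẋ(t) = (Γ ⊗ Q_t) x(t), one has |x(t)| ≤ α |x(0)| for all t ≥ 0. -/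
open Matrix MeasureTheory Filter
open scoped Kronecker

noncomputable section

open scoped Matrix.Norms.L2Operator in
/-- If the complex spectrum of a real matrix lies in the open unit disc, some positive power of the
matrix is a Euclidean contraction. -/
lemma exists_pow_contraction {ι : Type*} [Fintype ι] [DecidableEq ι] (D : Matrix ι ι ℝ)
    (hD : ∀ μ ∈ spectrum ℂ (D.map Complex.ofRealHom), ‖μ‖ < 1) :
    ∃ m : ℕ, 0 < m ∧ (1 - (D ^ m)ᵀ * D ^ m).PosSemidef := by
  set A : Matrix ι ι ℂ := D.map Complex.ofRealHom with hA
  have hr : spectralRadius ℂ A < 1 := by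
    rcases (spectrum ℂ A).eq_empty_or_nonempty with h | h
    · simp [spectralRadius, h]
    · exact_mod_cast spectrum.spectralRadius_lt_of_forall_lt_of_nonempty h (r := 1)
        fun k hk => by simpa [← NNReal.coe_lt_coe] using hD k hk
  have hev := ((spectrum.pow_nnnorm_pow_one_div_tendsto_nhds_spectralRadius A).eventually_lt_const
    hr).and (eventually_gt_atTop 0)
  obtain ⟨m, hm, hm0⟩ := hev.exists
  refine ⟨m, hm0, .of_dotProduct_mulVec_nonneg ?_ fun v => ?_⟩
  · exact isHermitian_one.sub (isHermitian_conjTranspose_mul_self (D ^ m))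
  have hle : ‖A ^ m‖ ≤ 1 := by
    by_contra! hlt
    refine absurd hm (not_lt.2 ?_)
    apply ENNReal.one_le_rpow
    · exact_mod_cast hlt.le
    · positivity
  have hAm : A ^ m = (D ^ m).map Complex.ofRealHom := (Matrix.map_pow D Complex.ofRealHom m).symm
  have h1 := (A ^ m).l2_opNorm_mulVec (WithLp.toLp 2 fun i => (v i : ℂ))
  have h2 := h1.trans (mul_le_of_le_one_left (norm_nonneg _) hle)
  have h3 := pow_le_pow_left₀ (norm_nonneg _) h2 2
  have h4 : (A ^ m) *ᵥ (fun i => (v i : ℂ)) = fun i => (((D ^ m) *ᵥ v) i : ℂ) := by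
    ext i
    simp [hAm, mulVec, dotProduct]
  simp only [EuclideanSpace.norm_sq_eq, PiLp.continuousLinearEquiv_symm_apply, h4,
    Complex.norm_real, Real.norm_eq_abs, sq_abs] at h3
  have h5 : v ⬝ᵥ ((D ^ m)ᵀ * D ^ m) *ᵥ v = ∑ i, ((D ^ m) *ᵥ v) i ^ 2 := by
    rw [← mulVec_mulVec, dotProduct_mulVec, vecMul_transpose]
    simp [dotProduct, sq]
  simp only [star_trivial, sub_mulVec, dotProduct_sub, one_mulVec, h5, sub_nonneg]
  simpa [dotProduct, sq] using h3

/-- A matrix whose kernel meets its range trivially admits a projection onto its kernel which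
annihilates its range. -/
lemma exists_kernel_projection {ι K : Type*} [Fintype ι] [DecidableEq ι] [Field K]
    (A : Matrix ι ι K) (hA : ∀ v, A *ᵥ (A *ᵥ v) = 0 → A *ᵥ v = 0) :
    ∃ R X : Matrix ι ι K, A * R = 0 ∧ R * A = 0 ∧ R * R = R ∧ X * (A - R) = 1 := by
  have hdisj : Disjoint (LinearMap.ker A.toLin') (LinearMap.range A.toLin') := by
    rw [Submodule.disjoint_def]
    rintro _ hx ⟨v, rfl⟩
    simpa using hA v (by simpa using hx)
  have hc : IsCompl (LinearMap.ker A.toLin') (LinearMap.range A.toLin') := by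
    refine (Submodule.isCompl_iff_disjoint _ _ ?_).2 hdisj
    rw [add_comm, LinearMap.finrank_range_add_finrank_ker]
  set π := Submodule.projection _ _ hc with hπ
  have hAπ : A * LinearMap.toMatrix' π = 0 := by
    apply Matrix.toLin'.injective
    refine LinearMap.ext fun v => ?_
    have : A.toLin' (π v) = 0 := LinearMap.mem_ker.1 (Submodule.projection_apply_mem hc v)
    simpa [toLin'_mul] using this
  have hπA : LinearMap.toMatrix' π * A = 0 := by
    apply Matrix.toLin'.injective
    refine LinearMap.ext fun v => ?_
    have : π (A.toLin' v) = 0 :=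
      (Submodule.projection_apply_eq_zero_iff hc).2 (LinearMap.mem_range_self _ v)
    simpa [toLin'_mul] using this
  have hππ : LinearMap.toMatrix' π * LinearMap.toMatrix' π = LinearMap.toMatrix' π := by
    rw [← LinearMap.toMatrix'_mul, (Submodule.isIdempotentElem_projection hc).eq]
  have hu : IsUnit (A - LinearMap.toMatrix' π) := by
    rw [← mulVec_injective_iff_isUnit]
    refine (injective_iff_map_eq_zero (A - LinearMap.toMatrix' π).mulVecLin).2 fun v hv => ?_
    have hv' : A *ᵥ v = π v := by
      simpa [sub_mulVec, sub_eq_zero, LinearMap.toMatrix'_mulVec] using hv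
    have hp : π v = 0 := by
      have h0 := congrArg (· *ᵥ v) hπA
      simp only [← mulVec_mulVec, hv', LinearMap.toMatrix'_mulVec, zero_mulVec] at h0
      have h1 := congrArg (· *ᵥ v) hππ
      simp only [← mulVec_mulVec, LinearMap.toMatrix'_mulVec] at h1
      rw [← h1, h0]
    have hker : v ∈ LinearMap.ker A.toLin' := by simpa [hp] using hv'
    rw [← Submodule.projection_apply_of_mem_left hc hker, ← hπ, hp]
  exact ⟨_, _, hAπ, hπA, hππ, nonsing_inv_mul _ ((isUnit_iff_isUnit_det _).1 hu)⟩

/-- A quadratic Lyapunov function from an explicit Euler step: if some power of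
`1 + h • A - R`, with `R` the projection onto `ker A` along the range, is a contraction,
then `A` is dissipative for some inner product. -/
lemma exists_lyapunov_of_euler_step {ι : Type*} [Fintype ι] [DecidableEq ι]
    {A R : Matrix ι ι ℝ} {h : ℝ} (hh : 0 < h) (hAR : A * R = 0) (hRA : R * A = 0)
    (hRR : R * R = R) {m : ℕ} (hm : 0 < m)
    (hD : (1 - ((1 + h • A - R) ^ m)ᵀ * (1 + h • A - R) ^ m).PosSemidef) :
    ∃ P : Matrix ι ι ℝ, (P - (1 / 2 : ℝ) • 1).PosSemidef ∧ (-(Aᵀ * P + P * A)).PosSemidef := by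
  set D := 1 + h • A - R with hDdef
  set S := 1 - R with hS
  have psd (B : Matrix ι ι ℝ) : (Bᵀ * B).PosSemidef := posSemidef_conjTranspose_mul_self B
  set F : ℕ → Matrix ι ι ℝ := fun k => (D ^ k * S)ᵀ * (D ^ k * S) with hF
  set P := Rᵀ * R + ∑ k ∈ Finset.range m, F k with hP
  have hDS : D * S = S * (1 + h • A) := by
    simp only [hDdef, hS, mul_sub, sub_mul, mul_add, add_mul, one_mul, mul_one, smul_mul_assoc,
      mul_smul_comm, hAR, hRA, hRR, smul_zero]
    module
  have hF0 : F 0 = Sᵀ * S := by simp [hF]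
  have hPpsd : P.PosSemidef := (psd R).add (posSemidef_sum _ fun k _ => psd _)
  have hFstep (k : ℕ) : (1 + h • A)ᵀ * F k * (1 + h • A) = F (k + 1) := by
    have : D ^ (k + 1) * S = D ^ k * S * (1 + h • A) := by
      rw [pow_succ, mul_assoc, hDS, mul_assoc]
    simp only [hF]
    rw [this]
    simp only [transpose_mul, mul_assoc]
  have hRE : R * (1 + h • A) = R := by simp [mul_add, hRA]
  have hstep : (1 + h • A)ᵀ * P * (1 + h • A) = P + F m - F 0 := by
    have h1 : (1 + h • A)ᵀ * (Rᵀ * R) * (1 + h • A) = Rᵀ * R := by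
      rw [mul_assoc, mul_assoc, hRE, ← mul_assoc, ← transpose_mul, hRE]
    have h2 := (Finset.sum_range_succ F m).symm.trans (Finset.sum_range_succ' F m)
    rw [hP, mul_add _ (Rᵀ * R), add_mul _ _ (1 + h • A), h1, Finset.mul_sum, Finset.sum_mul,
      Finset.sum_congr rfl fun k _ => hFstep k, add_assoc, h2]
    abel
  refine ⟨P, ?_, ?_⟩
  · obtain ⟨k, rfl⟩ : ∃ k, m = k + 1 := ⟨m - 1, by omega⟩
    have : P - (1 / 2 : ℝ) • 1 = (1 / 2 : ℝ) • (((2 : ℝ) • R - 1)ᵀ * ((2 : ℝ) • R - 1))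
        + ∑ j ∈ Finset.range k, F (j + 1) := by
      rw [hP, Finset.sum_range_succ', hF0]
      simp only [hS, transpose_sub, transpose_smul, transpose_one, mul_sub, sub_mul, one_mul,
        mul_one, smul_mul_assoc, mul_smul_comm]
      module
    rw [this]
    exact ((psd _).smul (by norm_num)).add (posSemidef_sum _ fun j _ => psd _)
  · have hdiff : F 0 - F m = Sᵀ * (1 - (D ^ m)ᵀ * D ^ m) * S := by
      rw [hF0]
      simp only [hF, transpose_mul, mul_sub, sub_mul, mul_one, mul_assoc]
    have hnn : (F 0 - F m).PosSemidef := by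
      rw [hdiff]
      exact hD.conjTranspose_mul_mul_same S
    have key : -(Aᵀ * P + P * A) = h⁻¹ • (F 0 - F m) + h • (Aᵀ * P * A) := by
      have h1 : h • (Aᵀ * P + P * A) + (h * h) • (Aᵀ * P * A) = F m - F 0 := by
        rw [add_sub_assoc] at hstep
        rw [← add_right_inj P, ← hstep]
        simp only [transpose_add, transpose_smul, transpose_one, mul_add, add_mul, one_mul,
          mul_one, smul_mul_assoc, mul_smul_comm, smul_smul, smul_add]
        abel
      rw [← neg_sub (F m) (F 0), ← h1, smul_neg, smul_add, smul_smul, smul_smul,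
        inv_mul_cancel₀ hh.ne', inv_mul_cancel_left₀ hh.ne', one_smul]
      abel
    rw [key]
    exact (hnn.smul (by positivity)).add ((hPpsd.conjTranspose_mul_mul_same A).smul hh.le)

lemma IsInterconnection.sum_erase {p : ℕ} {Γ : Matrix (Fin p) (Fin p) ℝ}
    (hΓ : IsInterconnection Γ) (i : Fin p) : ∑ j ∈ Finset.univ.erase i, Γ i j = -Γ i i := by
  rw [hΓ.2 i, neg_neg, Finset.filter_ne']

lemma IsInterconnection.diag_nonpos {p : ℕ} {Γ : Matrix (Fin p) (Fin p) ℝ}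
    (hΓ : IsInterconnection Γ) (i : Fin p) : Γ i i ≤ 0 := by
  rw [← neg_nonneg, ← hΓ.sum_erase i]
  exact Finset.sum_nonneg fun j hj => hΓ.1 i j (Finset.ne_of_mem_erase hj).symm

/-- An explicit Euler step of an interconnection does not increase the sup norm. -/
lemma IsInterconnection.norm_euler_step_le {p : ℕ} {Γ : Matrix (Fin p) (Fin p) ℝ}
    (hΓ : IsInterconnection Γ) {h : ℝ} (hh : 0 < h) (hd : ∀ i, h * -Γ i i < 1)
    (v : Fin p → ℝ) : ‖v + h • Γ *ᵥ v‖ ≤ ‖v‖ := by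
  refine (pi_norm_le_iff_of_nonneg (norm_nonneg _)).2 fun i => ?_
  have hsplit : (v + h • Γ *ᵥ v) i
      = (1 - h * -Γ i i) * v i + h * ∑ j ∈ Finset.univ.erase i, Γ i j * v j := by
    have := Finset.add_sum_erase Finset.univ (fun j => Γ i j * v j) (Finset.mem_univ i)
    simp only [Pi.add_apply, Pi.smul_apply, smul_eq_mul, mulVec, dotProduct, ← this]
    ring
  have hsum : ‖∑ j ∈ Finset.univ.erase i, Γ i j * v j‖ ≤ -Γ i i * ‖v‖ := by
    rw [← hΓ.sum_erase i, Finset.sum_mul]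
    refine norm_sum_le_of_le _ fun j hj => ?_
    have h0 := hΓ.1 i j (Finset.ne_of_mem_erase hj).symm
    rw [norm_mul, Real.norm_of_nonneg h0]
    exact mul_le_mul_of_nonneg_left (norm_le_pi_norm v j) h0
  rw [hsplit]
  refine (norm_add_le _ _).trans ?_
  rw [norm_mul, norm_mul, Real.norm_of_nonneg hh.le, Real.norm_of_nonneg (by linarith [hd i])]
  have h1 := mul_le_mul_of_nonneg_left (norm_le_pi_norm v i)
    (by linarith [hd i] : 0 ≤ 1 - h * -Γ i i)
  have h2 := mul_le_mul_of_nonneg_left hsum hh.le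
  linarith

lemma IsInterconnection.exists_step {p : ℕ} {Γ : Matrix (Fin p) (Fin p) ℝ}
    (hΓ : IsInterconnection Γ) : ∃ h : ℝ, 0 < h ∧ ∀ i, h * -Γ i i < 1 := by
  have hs : 0 ≤ ∑ j, -Γ j j := Finset.sum_nonneg fun j _ => neg_nonneg.2 (hΓ.diag_nonpos j)
  refine ⟨(1 + ∑ j, -Γ j j)⁻¹, by positivity, fun i => ?_⟩
  have hle := Finset.single_le_sum (f := fun j => -Γ j j)
    (fun j _ => neg_nonneg.2 (hΓ.diag_nonpos j)) (Finset.mem_univ i)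
  rw [inv_mul_lt_iff₀ (by positivity)]
  linarith

/-- The zero eigenvalue of an interconnection is semisimple. -/
lemma IsInterconnection.mulVec_eq_zero {p : ℕ} {Γ : Matrix (Fin p) (Fin p) ℝ}
    (hΓ : IsInterconnection Γ) (v : Fin p → ℝ) (hv : Γ *ᵥ (Γ *ᵥ v) = 0) : Γ *ᵥ v = 0 := by
  obtain ⟨h, hh, hd⟩ := hΓ.exists_step
  have hb (k : ℕ) : ‖v + (k * h) • Γ *ᵥ v‖ ≤ ‖v‖ := by
    induction k with
    | zero => simp
    | succ k ih =>
      refine le_trans (le_of_eq ?_) ((hΓ.norm_euler_step_le hh hd _).trans ih)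
      rw [mulVec_add, mulVec_smul, hv, smul_zero, add_zero, add_assoc, ← add_smul]
      push_cast
      ring_nf
  by_contra hne
  have hpos : 0 < h * ‖Γ *ᵥ v‖ := mul_pos hh (norm_pos_iff.2 hne)
  obtain ⟨k, hk⟩ := exists_nat_gt (2 * ‖v‖ / (h * ‖Γ *ᵥ v‖))
  rw [div_lt_iff₀ hpos] at hk
  have h1 : ‖(k * h) • Γ *ᵥ v‖ ≤ ‖v‖ + ‖v‖ := by
    have := norm_sub_le (v + (k * h) • Γ *ᵥ v) v
    rw [add_sub_cancel_left] at this
    linarith [hb k]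
  rw [norm_smul, Real.norm_of_nonneg (by positivity)] at h1
  linarith

/-- A closed disc of radius less than one, internally tangent to the unit circle at `1`, meets the
unit circle only there. -/
lemma norm_lt_one_of_mem_tangent_disc {z : ℂ} {s : ℝ} (hs0 : 0 ≤ s) (hs : s < 1)
    (hz : ‖z - 1 + s‖ ≤ s) (h1 : z ≠ 1) : ‖z‖ < 1 := by
  have hsq := pow_le_pow_left₀ (norm_nonneg _) hz 2
  rw [Complex.sq_norm, Complex.normSq_apply] at hsq
  simp only [Complex.add_re, Complex.sub_re, Complex.one_re, Complex.ofReal_re, Complex.add_im,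
    Complex.sub_im, Complex.one_im, Complex.ofReal_im] at hsq
  have hlt : z.re < 1 := by
    have hle : z.re ≤ 1 := by nlinarith [sq_nonneg z.im]
    refine lt_of_le_of_ne hle fun he => h1 (Complex.ext he ?_)
    rw [he] at hsq
    have : z.im * z.im ≤ 0 := by nlinarith
    simpa using le_antisymm this (mul_self_nonneg _)
  rw [← sq_lt_one_iff₀ (norm_nonneg _), Complex.sq_norm, Complex.normSq_apply]
  nlinarith

/-- Every interconnection is dissipative for some inner product. -/
lemma IsInterconnection.exists_lyapunov {p : ℕ} {Γ : Matrix (Fin p) (Fin p) ℝ}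
    (hΓ : IsInterconnection Γ) :
    ∃ P : Matrix (Fin p) (Fin p) ℝ,
      (P - (1 / 2 : ℝ) • 1).PosSemidef ∧ (-(Γᵀ * P + P * Γ)).PosSemidef := by
  obtain ⟨h, hh, hd⟩ := hΓ.exists_step
  obtain ⟨R, X, hΓR, hRΓ, hRR, hX⟩ := exists_kernel_projection Γ hΓ.mulVec_eq_zero
  suffices hspec : ∀ μ ∈ spectrum ℂ ((1 + h • Γ - R).map Complex.ofRealHom), ‖μ‖ < 1 by
    obtain ⟨m, hm, hD⟩ := exists_pow_contraction _ hspec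
    exact exists_lyapunov_of_euler_step hh hΓR hRΓ hRR hm hD
  intro μ hμ
  rw [← spectrum_toLin', ← Module.End.hasEigenvalue_iff_mem_spectrum] at hμ
  obtain ⟨v, hv⟩ := hμ.exists_hasEigenvector
  by_cases hμ0 : μ = 0
  · simp [hμ0]
  let c : Matrix (Fin p) (Fin p) ℝ →+* Matrix (Fin p) (Fin p) ℂ := Complex.ofRealHom.mapMatrix
  have hc1 : c Γ * c R = 0 := by rw [← map_mul, hΓR, map_zero]
  have hc2 : c R * c Γ = 0 := by rw [← map_mul, hRΓ, map_zero]
  have hc3 : c R * c R = c R := by rw [← map_mul, hRR]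
  have hcX : c X * (c Γ - c R) = 1 := by rw [← map_sub, ← map_mul, hX, map_one]
  have hsm : c (h • Γ) = (h : ℂ) • c Γ := by
    ext i j
    simp [c]
  have hev : (1 + (h : ℂ) • c Γ - c R) *ᵥ v = μ • v := by
    have := hv.apply_eq_smul
    rw [toLin'_apply] at this
    rw [← this, ← hsm, ← map_one c, ← map_add, ← map_sub]
    rfl
  have hRv : c R *ᵥ v = 0 := by
    have := congrArg (c R *ᵥ ·) hev
    simp only [mulVec_mulVec, mul_sub, mul_add, mul_one, mul_smul_comm, hc2, hc3, smul_zero,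
      add_zero, sub_self, zero_mulVec, mulVec_smul] at this
    exact (smul_eq_zero.1 this.symm).resolve_left hμ0
  have hhc : (h : ℂ) ≠ 0 := by exact_mod_cast hh.ne'
  have hΓv : c Γ *ᵥ v = ((μ - 1) / h) • v := by
    rw [sub_mulVec, hRv, sub_zero, add_mulVec, one_mulVec, smul_mulVec] at hev
    rw [div_eq_inv_mul, mul_smul, sub_smul, one_smul, ← hev, add_sub_cancel_left, smul_smul,
      inv_mul_cancel₀ hhc, one_smul]
  have hμ1 : μ ≠ 1 := by
    rintro rfl
    refine hv.2 ?_
    rw [← one_mulVec v, ← hcX, ← mulVec_mulVec, sub_mulVec, hΓv, hRv]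
    simp
  have hev' : Module.End.HasEigenvalue (toLin' (c Γ)) ((μ - 1) / h) :=
    Module.End.hasEigenvalue_of_hasEigenvector
      (Module.End.hasEigenvector_iff.2 ⟨Module.End.mem_eigenspace_iff.2 (by simpa using hΓv), hv.2⟩)
  obtain ⟨k, hk⟩ := eigenvalue_mem_ball hev'
  have hrad : ∑ j ∈ Finset.univ.erase k, ‖c Γ k j‖ = -Γ k k := by
    rw [← hΓ.sum_erase k]
    refine Finset.sum_congr rfl fun j hj => ?_
    have h0 := hΓ.1 k j (Finset.ne_of_mem_erase hj).symm
    simp [c, abs_of_nonneg h0]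
  rw [hrad, mem_closedBall_iff_norm] at hk
  refine norm_lt_one_of_mem_tangent_disc
    (mul_nonneg hh.le (neg_nonneg.2 (hΓ.diag_nonpos k))) (hd k) ?_ hμ1
  have heq : μ - 1 + ((h * -Γ k k : ℝ) : ℂ) = h * ((μ - 1) / h - c Γ k k) := by
    simp only [c, RingHom.mapMatrix_apply, map_apply, Complex.ofRealHom_eq_coe]
    push_cast
    field_simp
    ring
  rw [heq, norm_mul, Complex.norm_real, Real.norm_of_nonneg hh.le]
  exact mul_le_mul_of_nonneg_left hk hh.le

lemma neg_kronecker_eq {l m n p α : Type*} [NonUnitalNonAssocRing α] (A : Matrix l m α)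
    (B : Matrix n p α) : (-A) ⊗ₖ B = -(A ⊗ₖ B) := by
  ext
  simp

lemma eunorm_sq {ι : Type*} [Fintype ι] (v : ι → ℝ) : eunorm v ^ 2 = v ⬝ᵥ v := by
  rw [eunorm, Real.sq_sqrt (Finset.sum_nonneg fun i _ => sq_nonneg _)]
  simp [dotProduct, sq]

lemma abs_apply_le_eunorm {ι : Type*} [Fintype ι] (v : ι → ℝ) (i : ι) : |v i| ≤ eunorm v := by
  refine Real.abs_le_sqrt ?_
  exact Finset.single_le_sum (f := fun i => v i ^ 2) (fun i _ => sq_nonneg _) (Finset.mem_univ i)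

lemma dotProduct_mulVec_le_eunorm_sq {ι : Type*} [Fintype ι] (M : Matrix ι ι ℝ) (v : ι → ℝ) :
    v ⬝ᵥ M *ᵥ v ≤ (∑ i, ∑ j, |M i j|) * eunorm v ^ 2 := by
  simp only [dotProduct, mulVec, Finset.mul_sum, Finset.sum_mul]
  refine Finset.sum_le_sum fun i _ => Finset.sum_le_sum fun j _ => ?_
  calc v i * (M i j * v j) ≤ |v i * (M i j * v j)| := le_abs_self _
    _ = |M i j| * (|v i| * |v j|) := by rw [abs_mul, abs_mul]; ring
    _ ≤ |M i j| * eunorm v ^ 2 := by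
      rw [sq]
      gcongr
      · exact Real.sqrt_nonneg _
      all_goals apply abs_apply_le_eunorm

/-- A quadratic form decreases along a linear flow whose generator is dissipative for it. -/
lemma antitoneOn_dotProduct_mulVec {ι : Type*} [Fintype ι] {M : Matrix ι ι ℝ}
    {B : ℝ → Matrix ι ι ℝ} {x : ℝ → ι → ℝ}
    (hB : ∀ t, 0 ≤ t → (-((B t)ᵀ * M + M * B t)).PosSemidef)
    (hx : ∀ t, 0 ≤ t → ∀ i, HasDerivAt (fun s => x s i) ((B t *ᵥ x t) i) t) :
    AntitoneOn (fun t => x t ⬝ᵥ M *ᵥ x t) (Set.Ici 0) := by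
  have hder (t : ℝ) (ht : 0 ≤ t) : HasDerivAt (fun t => x t ⬝ᵥ M *ᵥ x t)
      (x t ⬝ᵥ ((B t)ᵀ * M + M * B t) *ᵥ x t) t := by
    have h1 : HasDerivAt (fun t => x t ⬝ᵥ M *ᵥ x t)
        (∑ i, ((B t *ᵥ x t) i * (M *ᵥ x t) i + x t i * (M *ᵥ (B t *ᵥ x t)) i)) t := by
      refine HasDerivAt.fun_sum fun i _ => (hx t ht i).mul ?_
      exact HasDerivAt.fun_sum fun j _ => (hx t ht j).const_mul (M i j)
    convert h1 using 1
    rw [Finset.sum_add_distrib, add_mulVec, dotProduct_add, ← mulVec_mulVec, ← mulVec_mulVec,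
      dotProduct_mulVec (x t) (B t)ᵀ, vecMul_transpose]
    rfl
  refine antitoneOn_of_deriv_nonpos (convex_Ici 0)
    (fun t ht => (hder t ht).continuousAt.continuousWithinAt)
    (fun t ht => (hder t (interior_subset ht)).differentiableAt.differentiableWithinAt)
    fun t ht => ?_
  have ht0 : 0 ≤ t := interior_subset ht
  have hneg := (hB t ht0).dotProduct_mulVec_nonneg (x t)
  rw [star_trivial, neg_mulVec, dotProduct_neg] at hneg
  rw [(hder t ht0).deriv]
  linarith

theorem stmt2 {p n : ℕ} (Γ : Matrix (Fin p) (Fin p) ℝ)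
    (hΓ : IsInterconnection Γ) :
    ∃ α : ℝ, 0 < α ∧
      ∀ Q : ℝ → Matrix (Fin n) (Fin n) ℝ,
        (∀ t : ℝ, 0 ≤ t → (Q t).PosSemidef) →
        (∀ a b : Fin n, ∀ s u : ℝ, IntervalIntegrable (fun t => Q t a b) volume s u) →
        ∀ x : ℝ → (Fin p × Fin n) → ℝ,
          (∀ t : ℝ, 0 ≤ t → ∀ i, HasDerivAt (fun s => x s i) (((Γ ⊗ₖ Q t).mulVec (x t)) i) t) →
          ∀ t : ℝ, 0 ≤ t → eunorm (x t) ≤ α * eunorm (x 0) := by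
  obtain ⟨P, hP, hPΓ⟩ := hΓ.exists_lyapunov
  set M : Matrix (Fin p × Fin n) (Fin p × Fin n) ℝ := P ⊗ₖ 1 with hM
  have hK : 0 ≤ ∑ i, ∑ j, |M i j| :=
    Finset.sum_nonneg fun i _ => Finset.sum_nonneg fun j _ => abs_nonneg _
  set K := ∑ i, ∑ j, |M i j|
  refine ⟨Real.sqrt (2 * K) + 1, by positivity, fun Q hQ _ x hx t ht => ?_⟩
  have hdec := antitoneOn_dotProduct_mulVec (M := M) (B := fun t => Γ ⊗ₖ Q t) (fun t ht => ?_) hx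
    Set.self_mem_Ici ht ht
  swap
  · have hsymm : (Q t)ᵀ = Q t := (hQ t ht).isHermitian
    have := hPΓ.kronecker (hQ t ht)
    rw [neg_kronecker_eq, add_kronecker] at this
    simp only [hM]
    rw [← kroneckerMap_transpose, ← mul_kronecker_mul, ← mul_kronecker_mul, hsymm, one_mul, mul_one]
    exact this
  have hlow := (hP.kronecker (PosSemidef.one (n := Fin n) (R := ℝ))).dotProduct_mulVec_nonneg (x t)
  rw [sub_eq_add_neg, add_kronecker, neg_kronecker_eq, ← sub_eq_add_neg, smul_kronecker,
    one_kronecker_one, ← hM, star_trivial, sub_mulVec, dotProduct_sub, smul_mulVec, one_mulVec,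
    dotProduct_smul, ← eunorm_sq, smul_eq_mul] at hlow
  have hup := dotProduct_mulVec_le_eunorm_sq M (x 0)
  have h0 : 0 ≤ eunorm (x 0) := Real.sqrt_nonneg _
  have hsq : eunorm (x t) ^ 2 ≤ (Real.sqrt (2 * K) * eunorm (x 0)) ^ 2 := by
    rw [mul_pow, Real.sq_sqrt (by positivity)]
    simp only at hdec
    linarith
  have := le_of_sq_le_sq hsq (by positivity)
  linarith
end
end

section
/- Let Q : ℝ≥0 → Q̄_n be sufficiently exciting. Then every solution of the linear system ẋ(t) = −Q_t x(t) satisfies lim_{t→∞} x(t) = 0. -/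
open Matrix MeasureTheory Filter
open scoped Kronecker

noncomputable section

lemma eunorm_nonneg {ι : Type*} [Fintype ι] (v : ι → ℝ) : 0 ≤ eunorm v := Real.sqrt_nonneg _

lemma eunorm_smul {ι : Type*} [Fintype ι] (c : ℝ) (v : ι → ℝ) :
    eunorm (c • v) = |c| * eunorm v := by
  rw [eunorm, eunorm, ← Real.sqrt_sq_eq_abs, ← Real.sqrt_mul (sq_nonneg c), Finset.mul_sum]
  simp [mul_pow]

lemma dotProduct_self_nonneg_real {ι : Type*} [Fintype ι] (v : ι → ℝ) : 0 ≤ v ⬝ᵥ v :=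
  eunorm_sq v ▸ sq_nonneg _

lemma dotProduct_le_eunorm_mul {ι : Type*} [Fintype ι] (u v : ι → ℝ) :
    u ⬝ᵥ v ≤ eunorm u * eunorm v := by
  refine Real.sum_mul_le_sqrt_mul_sqrt _ _ _

/-- The set defining the spectral norm is bounded above. -/
lemma bddAbove_eunorm_mulVec {m n : Type*} [Fintype m] [Fintype n] (M : Matrix m n ℝ) :
    BddAbove {c : ℝ | ∃ v : n → ℝ, eunorm v ≤ 1 ∧ c = eunorm (M.mulVec v)} := by
  refine ⟨Real.sqrt (∑ i, ∑ j, M i j ^ 2), ?_⟩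
  rintro c ⟨v, hv, rfl⟩
  refine Real.sqrt_le_sqrt (Finset.sum_le_sum fun i _ => ?_)
  have hv' : ∑ j, v j ^ 2 ≤ 1 := by simpa [eunorm] using hv
  calc (M.mulVec v i) ^ 2 ≤ (∑ j, M i j ^ 2) * ∑ j, v j ^ 2 :=
        Finset.sum_mul_sq_le_sq_mul_sq _ _ _
    _ ≤ ∑ j, M i j ^ 2 :=
        mul_le_of_le_one_right (Finset.sum_nonneg fun j _ => sq_nonneg _) hv'

lemma eunorm_mulVec_le {m n : Type*} [Fintype m] [Fintype n] (M : Matrix m n ℝ) (v : n → ℝ) :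
    eunorm (M.mulVec v) ≤ specNorm M * eunorm v := by
  rcases (eunorm_nonneg v).eq_or_lt with h | h
  · have hv : v = 0 := by
      rw [← dotProduct_self_eq_zero, ← eunorm_sq, ← h]; norm_num
    simp [hv, eunorm]
  · have hle : eunorm (M.mulVec ((eunorm v)⁻¹ • v)) ≤ specNorm M :=
      le_csSup (bddAbove_eunorm_mulVec M)
        ⟨_, by rw [eunorm_smul, abs_of_pos (inv_pos.2 h), inv_mul_cancel₀ h.ne'], rfl⟩
    rwa [mulVec_smul, eunorm_smul, abs_of_pos (inv_pos.2 h), inv_mul_le_iff₀ h, mul_comm] at hle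

/-- A matrix in `Q̄_n` is dominated by the identity as a quadratic form. -/
lemma InQbar.dotProduct_mulVec_le {n : ℕ} {R : Matrix (Fin n) (Fin n) ℝ} (hR : InQbar R)
    (v : Fin n → ℝ) : v ⬝ᵥ R *ᵥ v ≤ v ⬝ᵥ v := by
  have h0 := eunorm_nonneg v
  have h1 : eunorm (R *ᵥ v) ≤ eunorm v :=
    (eunorm_mulVec_le R v).trans (mul_le_of_le_one_left h0 hR.2)
  calc v ⬝ᵥ R *ᵥ v ≤ eunorm v * eunorm (R *ᵥ v) := dotProduct_le_eunorm_mul _ _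
    _ ≤ eunorm v * eunorm v := mul_le_mul_of_nonneg_left h1 h0
    _ = v ⬝ᵥ v := by rw [← sq, eunorm_sq]

lemma Matrix.PosSemidef.dotProduct_mulVec_self_nonneg {n : ℕ} {R : Matrix (Fin n) (Fin n) ℝ}
    (hR : R.PosSemidef) (v : Fin n → ℝ) : 0 ≤ v ⬝ᵥ R *ᵥ v := by
  simpa using hR.dotProduct_mulVec_nonneg v

lemma Matrix.PosSemidef.dotProduct_mulVec_symm {n : ℕ} {R : Matrix (Fin n) (Fin n) ℝ}
    (hR : R.PosSemidef) (u v : Fin n → ℝ) : u ⬝ᵥ R *ᵥ v = v ⬝ᵥ R *ᵥ u := by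
  have h : Rᵀ = R := by simpa using hR.isHermitian.eq
  rw [dotProduct_mulVec, ← mulVec_transpose, h, dotProduct_comm]

/-- A positive semidefinite matrix is bounded below, as a quadratic form, by its smallest
singular value. -/
lemma Matrix.PosSemidef.le_dotProduct_mulVec_of_le_sigmaMin {n : ℕ}
    {M : Matrix (Fin n) (Fin n) ℝ} (hM : M.PosSemidef) {ε : ℝ} (hε : ε ≤ sigmaMin M)
    (v : Fin n → ℝ) : ε * (v ⬝ᵥ v) ≤ v ⬝ᵥ M *ᵥ v := by
  have hH : (M - ε • (1 : Matrix (Fin n) (Fin n) ℝ)).IsHermitian :=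
    hM.isHermitian.sub (by simp [Matrix.IsHermitian])
  have hpos : (M - ε • (1 : Matrix (Fin n) (Fin n) ℝ)).PosSemidef := by
    rw [hH.posSemidef_iff_eigenvalues_nonneg]
    intro i
    set μ := hH.eigenvalues i
    obtain ⟨e, he⟩ : ∃ e : Fin n → ℝ, e = ⇑(hH.eigenvectorBasis i) := ⟨_, rfl⟩
    have hnorm : eunorm e = 1 := by
      have := hH.eigenvectorBasis.orthonormal.1 i
      rw [EuclideanSpace.norm_eq] at this
      simpa [eunorm, he] using this
    have hMe : M *ᵥ e = (μ + ε) • e := by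
      have := hH.mulVec_eigenvectorBasis i
      rw [← he, sub_mulVec, smul_mulVec, one_mulVec, sub_eq_iff_eq_add] at this
      rw [this, add_smul]
    have hnn : 0 ≤ μ + ε := by
      have := hM.dotProduct_mulVec_self_nonneg e
      rwa [hMe, dotProduct_smul, ← eunorm_sq, hnorm, smul_eq_mul, one_pow, mul_one] at this
    have hle : sigmaMin M ≤ eunorm (M *ᵥ e) :=
      csInf_le ⟨0, by rintro c ⟨v, -, rfl⟩; exact eunorm_nonneg _⟩ ⟨e, hnorm, rfl⟩
    rw [hMe, eunorm_smul, hnorm, mul_one, abs_of_nonneg hnn] at hle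
    change 0 ≤ μ
    linarith
  have := hpos.dotProduct_mulVec_self_nonneg v
  rw [sub_mulVec, smul_mulVec, one_mulVec, dotProduct_sub, dotProduct_smul, smul_eq_mul] at this
  linarith

section Integral

variable {n : ℕ} {Q : ℝ → Matrix (Fin n) (Fin n) ℝ} {a b : ℝ}

lemma intervalIntegrable_mulVec_apply
    (hQint : ∀ i j, IntervalIntegrable (fun t => Q t i j) volume a b) (v : Fin n → ℝ)
    (i : Fin n) : IntervalIntegrable (fun t => (Q t *ᵥ v) i) volume a b := by
  simpa [Finset.sum_fn, mulVec, dotProduct] using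
    IntervalIntegrable.sum Finset.univ fun j _ => (hQint i j).mul_const (v j)

lemma intervalIntegrable_dotProduct_mulVec
    (hQint : ∀ i j, IntervalIntegrable (fun t => Q t i j) volume a b) (u v : Fin n → ℝ) :
    IntervalIntegrable (fun t => u ⬝ᵥ Q t *ᵥ v) volume a b := by
  simpa [Finset.sum_fn, dotProduct] using IntervalIntegrable.sum Finset.univ fun i _ =>
    (intervalIntegrable_mulVec_apply hQint v i).const_mul (u i)

lemma integral_dotProduct_mulVec
    (hQint : ∀ i j, IntervalIntegrable (fun t => Q t i j) volume a b) (u v : Fin n → ℝ) :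
    u ⬝ᵥ (Matrix.of fun i j => ∫ t in a..b, Q t i j) *ᵥ v = ∫ t in a..b, u ⬝ᵥ Q t *ᵥ v := by
  simp only [dotProduct]
  rw [intervalIntegral.integral_finsetSum fun i _ =>
    (intervalIntegrable_mulVec_apply hQint v i).const_mul (u i)]
  refine Finset.sum_congr rfl fun i _ => ?_
  rw [intervalIntegral.integral_const_mul]
  simp only [mulVec, dotProduct, of_apply]
  rw [intervalIntegral.integral_finsetSum fun j _ => (hQint i j).mul_const _]
  simp only [intervalIntegral.integral_mul_const]

lemma posSemidef_integral (hab : a ≤ b) (hQ : ∀ t ∈ Set.Icc a b, (Q t).PosSemidef)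
    (hQint : ∀ i j, IntervalIntegrable (fun t => Q t i j) volume a b) :
    (Matrix.of fun i j => ∫ t in a..b, Q t i j).PosSemidef := by
  refine .of_dotProduct_mulVec_nonneg ?_ fun v => ?_
  · ext i j
    simp only [conjTranspose_apply, of_apply, star_trivial]
    refine intervalIntegral.integral_congr fun t ht => ?_
    rw [Set.uIcc_of_le hab] at ht
    simpa using (hQ t ht).isHermitian.apply i j
  · rw [star_trivial, integral_dotProduct_mulVec hQint]
    exact intervalIntegral.integral_nonneg hab fun t ht =>
      (hQ t ht).dotProduct_mulVec_self_nonneg v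

end Integral

section Solution

variable {n : ℕ} {Q : ℝ → Matrix (Fin n) (Fin n) ℝ} {x : ℝ → Fin n → ℝ}

lemma hasDerivAt_const_dotProduct {t : ℝ}
    (hx : ∀ i, HasDerivAt (fun s => x s i) (-((Q t).mulVec (x t)) i) t) (d : Fin n → ℝ) :
    HasDerivAt (fun s => d ⬝ᵥ x s) (-(d ⬝ᵥ Q t *ᵥ x t)) t := by
  have h := HasDerivAt.fun_sum (u := Finset.univ) fun i _ => (hx i).const_mul (d i)
  simpa [dotProduct] using h

lemma hasDerivAt_dotProduct_self {t : ℝ}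
    (hx : ∀ i, HasDerivAt (fun s => x s i) (-((Q t).mulVec (x t)) i) t) :
    HasDerivAt (fun s => x s ⬝ᵥ x s) (-(2 * (x t ⬝ᵥ Q t *ᵥ x t))) t := by
  have h := HasDerivAt.fun_sum (u := Finset.univ) fun i _ => (hx i).mul (hx i)
  refine h.congr_deriv ?_
  simp only [dotProduct, Finset.mul_sum, ← Finset.sum_neg_distrib]
  exact Finset.sum_congr rfl fun i _ => by ring

lemma antitoneOn_dotProduct_self {a : ℝ} (hQ : ∀ t, a ≤ t → InQbar (Q t))
    (hx : ∀ t, a ≤ t → ∀ i, HasDerivAt (fun s => x s i) (-((Q t).mulVec (x t)) i) t) :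
    AntitoneOn (fun t => x t ⬝ᵥ x t) (Set.Ici a) := by
  refine antitoneOn_of_hasDerivWithinAt_nonpos (convex_Ici a)
    (fun t ht => (hasDerivAt_dotProduct_self (hx t ht)).continuousAt.continuousWithinAt)
    (fun t ht => (hasDerivAt_dotProduct_self (hx t (interior_subset ht))).hasDerivWithinAt)
    fun t ht => ?_
  have := (hQ t (interior_subset ht)).1.dotProduct_mulVec_self_nonneg (x t)
  linarith

/-- The displacement of a solution over time at most `T` is controlled by its energy loss. -/
lemma displacement_sq_le {a t T : ℝ} (hT : 0 < T) (hat : a ≤ t) (htT : t ≤ a + T)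
    (hQ : ∀ t, a ≤ t → InQbar (Q t))
    (hx : ∀ t, a ≤ t → ∀ i, HasDerivAt (fun s => x s i) (-((Q t).mulVec (x t)) i) t) :
    (x t - x a) ⬝ᵥ (x t - x a) ≤ T / 2 * (x a ⬝ᵥ x a - x t ⬝ᵥ x t) := by
  set d := x t - x a with hd
  have hder (s : ℝ) (hs : a ≤ s) :
      HasDerivAt (fun s => 2 * T * (d ⬝ᵥ x s) + T ^ 2 / 2 * (x s ⬝ᵥ x s) - (d ⬝ᵥ d) * s)
        (2 * T * (-(d ⬝ᵥ Q s *ᵥ x s)) + T ^ 2 / 2 * (-(2 * (x s ⬝ᵥ Q s *ᵥ x s)))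
          - (d ⬝ᵥ d) * 1) s :=
    (((hasDerivAt_const_dotProduct (hx s hs) d).const_mul _).add
      ((hasDerivAt_dotProduct_self (hx s hs)).const_mul _)).sub ((hasDerivAt_id s).const_mul _)
  have hanti := antitoneOn_of_hasDerivWithinAt_nonpos (convex_Ici a)
    (fun s hs => (hder s hs).continuousAt.continuousWithinAt)
    (fun s hs => (hder s (interior_subset hs)).hasDerivWithinAt) (fun s hs => by
      have hs' : a ≤ s := interior_subset hs
      have h1 := (hQ s hs').1.dotProduct_mulVec_self_nonneg (d + T • x s)
      have h2 := (hQ s hs').dotProduct_mulVec_le d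
      have h3 := (hQ s hs').1.dotProduct_mulVec_symm (x s) d
      simp only [mulVec_add, mulVec_smul, dotProduct_add, add_dotProduct, smul_dotProduct,
        dotProduct_smul, smul_eq_mul, h3] at h1
      linarith)
  have h := hanti (Set.self_mem_Ici) (Set.mem_Ici.2 hat) hat
  have hdd : d ⬝ᵥ d = d ⬝ᵥ x t - d ⬝ᵥ x a := by rw [← dotProduct_sub]
  have hdd0 := dotProduct_self_nonneg_real d
  simp only at h
  have h4 : (d ⬝ᵥ d) * (t - a) ≤ (d ⬝ᵥ d) * T := mul_le_mul_of_nonneg_left (by linarith) hdd0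
  refine le_of_mul_le_mul_left ?_ hT
  linear_combination h + h4 + 2 * T * hdd

/-- Relative energy loss of a solution over one excitation interval. -/
lemma excitation_mul_le_energy_loss {a T ε : ℝ} (hT : 0 < T)
    (hQ : ∀ t, a ≤ t → InQbar (Q t))
    (hQint : ∀ i j, IntervalIntegrable (fun t => Q t i j) volume a (a + T))
    (hε : ε ≤ sigmaMin (Matrix.of fun i j => ∫ t in a..(a + T), Q t i j))
    (hx : ∀ t, a ≤ t → ∀ i, HasDerivAt (fun s => x s i) (-((Q t).mulVec (x t)) i) t) :
    ε * (x a ⬝ᵥ x a) ≤ (1 + T ^ 2) * (x a ⬝ᵥ x a - x (a + T) ⬝ᵥ x (a + T)) := by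
  have haT : a ≤ a + T := by linarith
  have hM := (posSemidef_integral haT (fun t ht => (hQ t ht.1).1)
    hQint).le_dotProduct_mulVec_of_le_sigmaMin hε (x a)
  rw [integral_dotProduct_mulVec hQint] at hM
  set L := x a ⬝ᵥ x a - x (a + T) ⬝ᵥ x (a + T) with hL
  have hder (s : ℝ) (hs : a ≤ s) :
      HasDerivAt (fun s => T * L * s - x s ⬝ᵥ x s)
        (T * L * 1 - (-(2 * (x s ⬝ᵥ Q s *ᵥ x s)))) s :=
    ((hasDerivAt_id s).const_mul _).sub (hasDerivAt_dotProduct_self (hx s hs))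
  have hint := intervalIntegral.integral_le_sub_of_hasDeriv_right_of_le haT
    (fun s hs => (hder s hs.1).continuousAt.continuousWithinAt)
    (fun s hs => (hder s hs.1.le).hasDerivWithinAt)
    ((intervalIntegrable_iff_integrableOn_Icc_of_le haT).1
      (intervalIntegrable_dotProduct_mulVec hQint (x a) (x a)))
    (fun s hs => by
      have hs' := hs.1.le
      set d := x s - x a with hd
      have hxa : x a = x s - d := by simp [hd]
      have h1 := (hQ s hs').1.dotProduct_mulVec_self_nonneg (x s + d)
      have h2 := (hQ s hs').dotProduct_mulVec_le d
      have h3 := displacement_sq_le hT hs' hs.2.le hQ hx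
      have hanti : x (a + T) ⬝ᵥ x (a + T) ≤ x s ⬝ᵥ x s :=
        antitoneOn_dotProduct_self hQ hx hs' haT hs.2.le
      have h4 : T / 2 * (x a ⬝ᵥ x a - x s ⬝ᵥ x s) ≤ T / 2 * L :=
        mul_le_mul_of_nonneg_left (by linarith) (by linarith)
      have h5 : x a ⬝ᵥ Q s *ᵥ x a = 2 * (x s ⬝ᵥ Q s *ᵥ x s) + 2 * (d ⬝ᵥ Q s *ᵥ d)
          - (x s + d) ⬝ᵥ Q s *ᵥ (x s + d) := by
        rw [hxa]
        simp only [mulVec_add, mulVec_sub, dotProduct_add, dotProduct_sub, add_dotProduct,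
          sub_dotProduct]
        ring
      linarith)
  refine (hM.trans hint).trans (le_of_eq ?_)
  rw [hL]
  ring

end Solution

lemma deltaCT_mul_le {ε T : ℝ} (hε : 0 < ε) (hT : 0 < T) (hεT : ε ≤ T) :
    deltaCT ε T * (1 + T ^ 2) ≤ ε := by
  have hsq : 0 < 1 + T ^ 2 := by positivity
  rcases le_total T 1 with h | h
  · calc deltaCT ε T * (1 + T ^ 2) ≤ ε / 2 * (1 + T ^ 2) :=
          mul_le_mul_of_nonneg_right (min_le_left _ _) hsq.le
      _ ≤ ε := by nlinarith [mul_le_of_le_one_right hε.le (pow_le_one₀ hT.le h : T ^ 2 ≤ 1)]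
  · calc deltaCT ε T * (1 + T ^ 2) ≤ ε ^ 3 / (240 * T ^ 5) * (1 + T ^ 2) :=
          mul_le_mul_of_nonneg_right (min_le_right _ _) hsq.le
      _ ≤ ε := by
        rw [div_mul_eq_mul_div, div_le_iff₀ (by positivity)]
        have h1 : ε ^ 2 ≤ T ^ 2 := by gcongr
        have h2 : 1 + T ^ 2 ≤ 2 * T ^ 2 := by nlinarith
        have h3 : T ^ 4 ≤ T ^ 5 := pow_le_pow_right₀ h (by norm_num)
        have h4 : 0 < T ^ 4 := by positivity
        calc ε ^ 3 * (1 + T ^ 2) = ε * (ε ^ 2 * (1 + T ^ 2)) := by ring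
          _ ≤ ε * (T ^ 2 * (2 * T ^ 2)) := by gcongr
          _ ≤ ε * (240 * T ^ 5) := by
            refine mul_le_mul_of_nonneg_left ?_ hε.le
            nlinarith

/-- Excitation over an interval is at most the length of the interval, unless `v = 0`. -/
lemma excitation_mul_le_length_mul {n : ℕ} {Q : ℝ → Matrix (Fin n) (Fin n) ℝ} {a T ε : ℝ}
    (hT : 0 < T) (hQ : ∀ t, a ≤ t → InQbar (Q t))
    (hQint : ∀ i j, IntervalIntegrable (fun t => Q t i j) volume a (a + T))
    (hε : ε ≤ sigmaMin (Matrix.of fun i j => ∫ t in a..(a + T), Q t i j)) (v : Fin n → ℝ) :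
    ε * (v ⬝ᵥ v) ≤ T * (v ⬝ᵥ v) := by
  have haT : a ≤ a + T := by linarith
  have hM := (posSemidef_integral haT (fun t ht => (hQ t ht.1).1)
    hQint).le_dotProduct_mulVec_of_le_sigmaMin hε v
  rw [integral_dotProduct_mulVec hQint] at hM
  have h := intervalIntegral.integral_mono_on haT
    (intervalIntegrable_dotProduct_mulVec hQint v v) intervalIntegrable_const
    fun t ht => (hQ t ht.1).dotProduct_mulVec_le v
  rw [intervalIntegral.integral_const, add_sub_cancel_left, smul_eq_mul] at h
  exact hM.trans h

/-- Energy loss of a solution over one excitation interval, in terms of `deltaCT`. -/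
lemma deltaCT_mul_le_energy_loss {n : ℕ} {Q : ℝ → Matrix (Fin n) (Fin n) ℝ}
    {x : ℝ → Fin n → ℝ} {a T ε : ℝ} (hε₀ : 0 < ε) (hT : 0 < T)
    (hQ : ∀ t, a ≤ t → InQbar (Q t))
    (hQint : ∀ i j, IntervalIntegrable (fun t => Q t i j) volume a (a + T))
    (hε : ε ≤ sigmaMin (Matrix.of fun i j => ∫ t in a..(a + T), Q t i j))
    (hx : ∀ t, a ≤ t → ∀ i, HasDerivAt (fun s => x s i) (-((Q t).mulVec (x t)) i) t) :
    deltaCT ε T * (x a ⬝ᵥ x a) ≤ x a ⬝ᵥ x a - x (a + T) ⬝ᵥ x (a + T) := by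
  have hloss := excitation_mul_le_energy_loss hT hQ hQint hε hx
  rcases (dotProduct_self_nonneg_real (x a)).eq_or_lt with h | h
  · rw [← h, mul_zero] at hloss ⊢
    exact nonneg_of_mul_nonneg_right hloss (by positivity)
  · have hδ := deltaCT_mul_le hε₀ hT
      (le_of_mul_le_mul_right (excitation_mul_le_length_mul hT hQ hQint hε (x a)) h)
    refine le_of_mul_le_mul_left (le_trans ?_ hloss) (by positivity : 0 < 1 + T ^ 2)
    calc (1 + T ^ 2) * (deltaCT ε T * (x a ⬝ᵥ x a))
        = deltaCT ε T * (1 + T ^ 2) * (x a ⬝ᵥ x a) := by ring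
      _ ≤ ε * (x a ⬝ᵥ x a) := mul_le_mul_of_nonneg_right hδ h.le

theorem stmt6 {n : ℕ}
    (Q : ℝ → Matrix (Fin n) (Fin n) ℝ)
    (hQ : ∀ t : ℝ, 0 ≤ t → InQbar (Q t))
    (hQint : ∀ a b : Fin n, ∀ s u : ℝ, IntervalIntegrable (fun t => Q t a b) volume s u)
    (hQse : SuffExcitingCT Q)
    (x : ℝ → Fin n → ℝ)
    (hx : ∀ t : ℝ, 0 ≤ t → ∀ a : Fin n,
      HasDerivAt (fun s => x s a) (-((Q t).mulVec (x t)) a) t) :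
    Tendsto (fun t => eunorm (x t)) atTop (nhds 0) := by
  obtain ⟨ε, T, hε, hT, hσ, hδ⟩ := hQse
  set τ : ℕ → ℝ := fun i => ∑ j ∈ Finset.range i, T j with hτ
  set V : ℝ → ℝ := fun t => x t ⬝ᵥ x t with hV
  have hτ0 (i : ℕ) : 0 ≤ τ i := Finset.sum_nonneg fun j _ => (hT j).le
  have hτsucc (i : ℕ) : τ (i + 1) = τ i + T i := Finset.sum_range_succ _ _
  have hV0 (t : ℝ) : 0 ≤ V t := dotProduct_self_nonneg_real _
  have hanti : AntitoneOn V (Set.Ici 0) := antitoneOn_dotProduct_self hQ hx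
  have hstep (i : ℕ) : deltaCT (ε i) (T i) * V (τ i) ≤ V (τ i) - V (τ (i + 1)) := by
    rw [hτsucc]
    exact deltaCT_mul_le_energy_loss (hε i) (hT i) (fun t ht => hQ t ((hτ0 i).trans ht))
      (fun a b => hQint a b _ _) (hσ i) fun t ht => hx t ((hτ0 i).trans ht)
  have hδ0 (i : ℕ) : 0 ≤ deltaCT (ε i) (T i) := by
    have := hε i
    have := hT i
    exact le_min (by positivity) (by positivity)
  have hsum (N : ℕ) : (∑ i ∈ Finset.range N, deltaCT (ε i) (T i)) * V (τ N) ≤ V 0 := by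
    calc (∑ i ∈ Finset.range N, deltaCT (ε i) (T i)) * V (τ N)
        = ∑ i ∈ Finset.range N, deltaCT (ε i) (T i) * V (τ N) := Finset.sum_mul _ _ _
      _ ≤ ∑ i ∈ Finset.range N, (V (τ i) - V (τ (i + 1))) := by
        refine Finset.sum_le_sum fun i hi => le_trans ?_ (hstep i)
        refine mul_le_mul_of_nonneg_left (hanti (hτ0 i) (hτ0 N) ?_) (hδ0 i)
        exact Finset.sum_le_sum_of_subset_of_nonneg
          (Finset.range_mono (Finset.mem_range.1 hi).le) fun j _ _ => (hT j).le
      _ = V (τ 0) - V (τ N) := Finset.sum_range_sub' _ _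
      _ ≤ V 0 := by
        have : τ 0 = 0 := Finset.sum_range_zero _
        rw [this]
        linarith [hV0 (τ N)]
  have hlim : Tendsto V atTop (nhds 0) := by
    rw [Metric.tendsto_atTop]
    intro η hη
    obtain ⟨N, hN⟩ := (hδ.eventually_gt_atTop (V 0 / η)).exists
    refine ⟨τ N, fun t ht => ?_⟩
    rw [Real.dist_eq, sub_zero, abs_of_nonneg (hV0 t)]
    have hle : V t ≤ V (τ N) := hanti (hτ0 N) ((hτ0 N).trans ht) ht
    by_contra! hcon
    rw [div_lt_iff₀ hη] at hN
    have := mul_le_mul_of_nonneg_left (hcon.trans hle) (Finset.sum_nonneg fun i _ => hδ0 i :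
      0 ≤ ∑ i ∈ Finset.range N, deltaCT (ε i) (T i))
    linarith [hsum N]
  have hsqrt := (Real.continuous_sqrt.tendsto 0).comp hlim
  rw [Real.sqrt_zero] at hsqrt
  refine hsqrt.congr fun t => ?_
  simp only [Function.comp, hV, ← eunorm_sq]
  exact Real.sqrt_sq (eunorm_nonneg _)
end
end
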